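/- Let P ⊆ ℝ^d be an integral polytope with the integer decomposition property, and define p_k(z) = Σ_{x ∈ kP ∩ ℤ^d} z^x. Then the sequence {p_k(z)}_{k≥0} satisfies a linear recurrence with characteristic polynomial ∏_{x ∈ P ∩ ℤ^d} (t − z^x). -/

import Mathlib

open Polynomial Finset Pointwise

/-- The lattice points of the `k`-th dilate of `P ⊆ ℝ^d`. -/
def latticePoints {d : ℕ} (P : Set (Fin d → ℝ)) (k : ℕ) : Set (Fin d → ℤ) :=
  {x : Fin d → ℤ | (fun i => (x i : ℝ)) ∈ (k : ℝ) • P}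

/-! Let `a i`, `i ∈ ι`, be lattice points with convex hull `P`, and put `n = |ι|`. Expanding
`∏ i, (t - z^(a i))`, the coefficient of `z^x` in the `k`-th recurrence is
`∑ S ⊆ ι, (-1)^|S| [x - ∑ i ∈ S, a i ∈ (k + n - |S|) P]`.
Let `Q` be the polytope of all weights `c : ι → [0, ∞)` with `∑ i, c i = k + n` and
`∑ i, c i • a i = x`. Subtracting the indicator of `S` from `c` shows that the bracket of `S` is one
exactly when `Q` meets all the half-spaces `{c | 1 ≤ c i}`, `i ∈ S`. These half-spaces cover `Q`,
since `n` weights of sum at least `n` cannot all be less than one. So the coefficient is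
`χ(Q) - χ(⋃ i, Q ∩ {c | 1 ≤ c i}) = 0`, by inclusion-exclusion for the Euler characteristic, which
is one on every nonempty compact convex set.
-/

section EulerCharacteristic

open Filter Topology

variable {κ G : Type*} [AddCommGroup G]

lemma eventually_nhdsGT_mem_iff {α : Type*} [LinearOrder α] [TopologicalSpace α] [OrderTopology α]
    {J : Set α} (hJ : IsClosed J) (hJ' : J.OrdConnected) (b : α) :
    ∀ᶠ t in 𝓝[>] b, t ∈ J ↔ b ∈ J ∧ ¬IsGreatest J b := by
  by_cases hb : b ∈ J
  · by_cases hmax : IsGreatest J b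
    · filter_upwards [self_mem_nhdsWithin] with t ht
      simpa [hmax] using fun h => (hmax.2 h).not_gt ht
    · obtain ⟨u, hu, hbu⟩ : ∃ u ∈ J, b < u := by
        simpa [IsGreatest, hb, mem_upperBounds] using hmax
      filter_upwards [Ioo_mem_nhdsGT hbu] with t ht
      simpa [hb, hmax] using hJ'.out hb hu ⟨ht.1.le, ht.2.le⟩
  · filter_upwards [nhdsWithin_le_nhds (hJ.isOpen_compl.mem_nhds hb)] with t ht
    simpa [hb] using ht

open Classical in
lemma sum_isGreatest_eq_zero_of_sum_mem_eq_zero {α : Type*} [LinearOrder α] [TopologicalSpace α]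
    [OrderTopology α] [DenselyOrdered α] [NoMaxOrder α] {T : Finset κ} {c : κ → G}
    {J : κ → Set α} (hJ : ∀ i ∈ T, IsClosed (J i)) (hJ' : ∀ i ∈ T, (J i).OrdConnected)
    (h : ∀ t, ∑ i ∈ T with t ∈ J i, c i = 0) (b : α) :
    ∑ i ∈ T with IsGreatest (J i) b, c i = 0 := by
  have hev : ∀ᶠ t in 𝓝[>] b, ∀ i ∈ T, t ∈ J i ↔ b ∈ J i ∧ ¬IsGreatest (J i) b :=
    T.eventually_all.2 fun i hi => eventually_nhdsGT_mem_iff (hJ i hi) (hJ' i hi) b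
  obtain ⟨t, ht⟩ := hev.exists
  calc ∑ i ∈ T with IsGreatest (J i) b, c i
      = ∑ i ∈ T with b ∈ J i ∧ IsGreatest (J i) b, c i :=
        Finset.sum_congr (filter_congr fun i _ => ⟨fun hg => ⟨hg.1, hg⟩, And.right⟩) fun _ _ => rfl
    _ = ∑ i ∈ T with b ∈ J i, c i - ∑ i ∈ T with b ∈ J i ∧ ¬IsGreatest (J i) b, c i := by
        rw [← filter_filter, ← filter_filter, eq_sub_iff_add_eq, sum_filter_add_sum_filter_not]
    _ = ∑ i ∈ T with b ∈ J i, c i - ∑ i ∈ T with t ∈ J i, c i := by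
        rw [filter_congr ht]
    _ = 0 := by rw [h, h, sub_zero]

open Classical in
lemma sum_nonempty_eq_zero_of_sum_mem_eq_zero_of_ordConnected {T : Finset κ} {c : κ → G}
    {J : κ → Set ℝ} (hJ : ∀ i ∈ T, IsCompact (J i)) (hJ' : ∀ i ∈ T, (J i).OrdConnected)
    (h : ∀ t, ∑ i ∈ T with t ∈ J i, c i = 0) :
    ∑ i ∈ T with (J i).Nonempty, c i = 0 := by
  have isGreatest_iff {i : κ} (hi : i ∈ T) (b : ℝ) :
      IsGreatest (J i) b ↔ (J i).Nonempty ∧ sSup (J i) = b :=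
    ⟨fun hb => ⟨⟨b, hb.1⟩, hb.csSup_eq⟩, fun ⟨hne, hb⟩ => hb ▸ (hJ i hi).isGreatest_sSup hne⟩
  rw [← sum_fiberwise_of_maps_to (t := T.image fun i => sSup (J i)) (g := fun i => sSup (J i))
    fun i hi => mem_image_of_mem _ (mem_of_mem_filter i hi)]
  refine Finset.sum_eq_zero fun b _ => ?_
  rw [filter_filter, ← filter_congr fun i hi => isGreatest_iff hi b]
  exact sum_isGreatest_eq_zero_of_sum_mem_eq_zero (fun i hi => (hJ i hi).isClosed) hJ' h b

variable {E : Type*} [AddCommGroup E] [Module ℝ E] [TopologicalSpace E]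

open Classical in
lemma sum_nonempty_eq_zero_of_sum_inter_preimage_nonempty_eq_zero (φ : E →L[ℝ] ℝ) {T : Finset κ}
    {c : κ → G} {K : κ → Set E} (hK : ∀ i ∈ T, IsCompact (K i)) (hK' : ∀ i ∈ T, Convex ℝ (K i))
    (h : ∀ t, ∑ i ∈ T with (K i ∩ φ ⁻¹' {t}).Nonempty, c i = 0) :
    ∑ i ∈ T with (K i).Nonempty, c i = 0 := by
  simp only [← Set.image_nonempty (f := φ) (s := K _)]
  refine sum_nonempty_eq_zero_of_sum_mem_eq_zero_of_ordConnected
    (fun i hi => (hK i hi).image φ.continuous)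
    (fun i hi => ((hK' i hi).linear_image φ.toLinearMap).ordConnected) fun t => ?_
  simpa only [Set.inter_nonempty, Set.mem_preimage, Set.mem_singleton_iff, Set.mem_image] using h t

open Classical in
lemma sum_nonempty_eq_zero_of_sum_inter_biInter_preimage_nonempty_eq_zero {ι : Type*}
    (φ : ι → E →L[ℝ] ℝ) (s : Finset ι) {T : Finset κ} {c : κ → G} {K : κ → Set E}
    (hK : ∀ i ∈ T, IsCompact (K i)) (hK' : ∀ i ∈ T, Convex ℝ (K i))
    (h : ∀ t : ι → ℝ, ∑ i ∈ T with (K i ∩ ⋂ j ∈ s, φ j ⁻¹' {t j}).Nonempty, c i = 0) :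
    ∑ i ∈ T with (K i).Nonempty, c i = 0 := by
  induction s using Finset.induction_on generalizing K with
  | empty => simpa using h
  | insert a s ha ih =>
    refine sum_nonempty_eq_zero_of_sum_inter_preimage_nonempty_eq_zero (φ a) hK hK' fun u => ?_
    refine ih (fun i hi => (hK i hi).inter_right (isClosed_singleton.preimage (φ a).continuous))
      (fun i hi => (hK' i hi).inter ((convex_singleton u).linear_preimage (φ a).toLinearMap))
      fun t => ?_
    have hslice : ⋂ j ∈ s, φ j ⁻¹' {Function.update t a u j} = ⋂ j ∈ s, φ j ⁻¹' {t j} :=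
      Set.iInter₂_congr fun j hj => by
        rw [Function.update_of_ne (ne_of_mem_of_not_mem hj ha)]
    simpa only [Finset.set_biInter_insert, Function.update_self, hslice, Set.inter_assoc]
      using h (Function.update t a u)

variable [T2Space E] [IsTopologicalAddGroup E] [ContinuousSMul ℝ E] [FiniteDimensional ℝ E]

open Classical in
/-- This makes the Euler characteristic well defined on combinations of indicator functions of
compact convex sets. -/
theorem sum_nonempty_eq_zero_of_sum_mem_eq_zero {T : Finset κ} {c : κ → G} {K : κ → Set E}
    (hK : ∀ i ∈ T, IsCompact (K i)) (hK' : ∀ i ∈ T, Convex ℝ (K i))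
    (h : ∀ x, ∑ i ∈ T with x ∈ K i, c i = 0) :
    ∑ i ∈ T with (K i).Nonempty, c i = 0 := by
  let b := Module.finBasis ℝ E
  refine sum_nonempty_eq_zero_of_sum_inter_biInter_preimage_nonempty_eq_zero
    (fun j => LinearMap.toContinuousLinearMap (b.coord j)) univ hK hK' fun t => ?_
  have hpoint : ⋂ j ∈ univ, LinearMap.toContinuousLinearMap (b.coord j) ⁻¹' {t j} =
      {b.equivFun.symm t} := by
    ext x
    rw [Set.mem_singleton_iff, LinearEquiv.eq_symm_apply, funext_iff]
    simp
  simpa only [hpoint, Set.inter_singleton_nonempty] using h (b.equivFun.symm t)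

open Classical in
theorem sum_neg_one_pow_card_inter_biInter_nonempty_eq_zero {ι : Type*} {s : Finset ι}
    {Q : Set E} (hQ : IsCompact Q) (hQ' : Convex ℝ Q) {F : ι → Set E}
    (hF : ∀ i ∈ s, IsClosed (F i)) (hF' : ∀ i ∈ s, Convex ℝ (F i)) (hcover : Q ⊆ ⋃ i ∈ s, F i) :
    ∑ S ∈ s.powerset with (Q ∩ ⋂ i ∈ S, F i).Nonempty, (-1 : ℤ) ^ #S = 0 := by
  refine sum_nonempty_eq_zero_of_sum_mem_eq_zero
    (fun S hS => hQ.inter_right (isClosed_biInter fun i hi => hF i (mem_powerset.1 hS hi)))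
    (fun S hS => hQ'.inter (convex_iInter₂ fun i hi => hF' i (mem_powerset.1 hS hi))) fun x => ?_
  by_cases hx : x ∈ Q
  · have hne : {i ∈ s | x ∈ F i}.Nonempty := by
      simpa [Finset.Nonempty] using hcover hx
    convert sum_powerset_neg_one_pow_card_of_nonempty hne using 2
    ext S
    simp [hx, subset_iff, forall_and]
  · simp [hx]

end EulerCharacteristic

section WeightFiber

variable {ι E : Type*} [Fintype ι] [AddCommGroup E] [Module ℝ E]

/-- The nonnegative weights of total mass `r` on the points `v i` whose weighted sum is `y`. For
`r = 1` this is the fibre over `y` of the map from the standard simplex onto the convex hull of the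
`v i`. -/
def weightFiber (v : ι → E) (r : ℝ) (y : E) : Set (ι → ℝ) :=
  {c | (∀ i, 0 ≤ c i) ∧ ∑ i, c i = r ∧ ∑ i, c i • v i = y}

lemma convex_weightFiber (v : ι → E) (r : ℝ) (y : E) : Convex ℝ (weightFiber v r y) := by
  rintro c ⟨hc, hcr, hcy⟩ e ⟨he, her, hey⟩ p q hp hq hpq
  refine ⟨fun i => add_nonneg (mul_nonneg hp (hc i)) (mul_nonneg hq (he i)), ?_, ?_⟩
  · simp [sum_add_distrib, ← mul_sum, hcr, her, ← add_mul, hpq]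
  · calc ∑ i, (p • c + q • e) i • v i = p • ∑ i, c i • v i + q • ∑ i, e i • v i := by
          simp [sum_add_distrib, add_smul, mul_smul, smul_sum]
      _ = y := by rw [hcy, hey, ← add_smul, hpq, one_smul]

lemma isCompact_weightFiber (v : ι → E) (r : ℝ) (y : E) : IsCompact (weightFiber v r y) := by
  let L := Fintype.linearCombination ℝ v
  have hL : IsClosed {c | L c = y} := by
    simpa [Set.preimage] using
      ((affineSpan ℝ {y}).comap L.toAffineMap).closed_of_finiteDimensional
  have hr : IsClosed {c : ι → ℝ | ∑ i, c i = r} := isClosed_eq (by fun_prop) (by fun_prop)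
  refine ((isCompact_univ_pi fun _ => isCompact_Icc (a := 0) (b := r)).inter_right
    (hr.inter hL)).of_isClosed_subset ?_ ?_
  · exact (isClosed_Ici (a := (0 : ι → ℝ))).inter (hr.inter hL)
  · exact fun c hc => ⟨fun i _ => ⟨hc.1 i, hc.2.1 ▸ single_le_sum (fun j _ => hc.1 j) (mem_univ i)⟩,
      hc.2⟩

lemma weightFiber_one_nonempty_iff_mem_convexHull {v : ι → E} {y : E} :
    (weightFiber v 1 y).Nonempty ↔ y ∈ convexHull ℝ (Set.range v) := by
  classical
  have hrange : Set.range v = Fintype.linearCombination ℝ v ''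
      Set.range fun i j : ι => if i = j then (1 : ℝ) else 0 := by
    rw [← Set.range_comp]
    exact congrArg Set.range (funext fun i => by simp [Fintype.linearCombination_apply])
  rw [hrange, ← LinearMap.image_convexHull, convexHull_basis_eq_stdSimplex]
  simp [weightFiber, stdSimplex, Set.Nonempty, Fintype.linearCombination_apply, and_assoc]

lemma smul_mem_weightFiber {v : ι → E} {r : ℝ} {y : E} {c : ι → ℝ} {t : ℝ} (ht : 0 ≤ t)
    (hc : c ∈ weightFiber v r y) : t • c ∈ weightFiber v (t * r) (t • y) := by
  obtain ⟨hc, rfl, rfl⟩ := hc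
  exact ⟨fun i => mul_nonneg ht (hc i), by simp [mul_sum], by simp [smul_sum, mul_smul]⟩

lemma weightFiber_nonempty_iff_mem_smul_convexHull [Nonempty ι] {v : ι → E} {r : ℝ} (hr : 0 ≤ r)
    {y : E} : (weightFiber v r y).Nonempty ↔ y ∈ r • convexHull ℝ (Set.range v) := by
  simp only [Set.mem_smul_set, ← weightFiber_one_nonempty_iff_mem_convexHull]
  constructor
  · rintro ⟨c, hc⟩
    rcases hr.eq_or_lt with rfl | hr
    · have hc0 : ∀ i, c i = 0 := by
        simpa [sum_eq_zero_iff_of_nonneg fun i _ => hc.1 i] using hc.2.1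
      obtain ⟨i⟩ := ‹Nonempty ι›
      have hvi : v i ∈ convexHull ℝ (Set.range v) := subset_convexHull ℝ _ ⟨i, rfl⟩
      exact ⟨v i, weightFiber_one_nonempty_iff_mem_convexHull.2 hvi, by simpa [hc0] using hc.2.2⟩
    · exact ⟨r⁻¹ • y, ⟨r⁻¹ • c, by
        simpa [hr.ne'] using smul_mem_weightFiber (inv_nonneg.2 hr.le) hc⟩, smul_inv_smul₀ hr.ne' y⟩
  · rintro ⟨y, ⟨c, hc⟩, rfl⟩
    exact ⟨r • c, by simpa using smul_mem_weightFiber hr hc⟩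

lemma weightFiber_inter_biInter_nonempty_iff (v : ι → E) (r : ℝ) (y : E) (S : Finset ι) :
    (weightFiber v r y ∩ ⋂ i ∈ S, {c | 1 ≤ c i}).Nonempty ↔
      (weightFiber v (r - #S) (y - ∑ i ∈ S, v i)).Nonempty := by
  classical
  let e : ι → ℝ := fun i => if i ∈ S then 1 else 0
  have he : ∑ i, e i = #S := by simp [e]
  have hev : ∑ i, e i • v i = ∑ i ∈ S, v i := by simp [e, ite_smul]
  constructor
  · rintro ⟨c, ⟨hc, hcr, hcy⟩, hcS⟩
    refine ⟨c - e, fun i => ?_, by simp [hcr, he], by simp [sub_smul, hcy, hev]⟩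
    by_cases hi : i ∈ S
    · simpa [e, hi] using Set.mem_iInter₂.1 hcS i hi
    · simpa [e, hi] using hc i
  · rintro ⟨c, hc, hcr, hcy⟩
    refine ⟨c + e, ⟨fun i => add_nonneg (hc i) (by positivity), ?_, ?_⟩,
      Set.mem_iInter₂.2 fun i hi => ?_⟩
    · simp [sum_add_distrib, hcr, he]
    · simp [sum_add_distrib, add_smul, hcy, hev]
    · simpa [e, hi] using hc i

lemma weightFiber_subset_iUnion_one_le [Nonempty ι] (v : ι → E) {r : ℝ} (y : E)
    (hr : Fintype.card ι ≤ r) : weightFiber v r y ⊆ ⋃ i ∈ univ, {c | 1 ≤ c i} := by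
  rintro c ⟨-, hcr, -⟩
  obtain ⟨i, -, hi⟩ : ∃ i ∈ univ, 1 ≤ c i :=
    exists_le_of_sum_le univ_nonempty (by simpa [hcr] using hr)
  exact Set.mem_iUnion₂.2 ⟨i, mem_univ i, hi⟩

open Classical in
theorem sum_neg_one_pow_card_sub_sum_mem_smul_convexHull_eq_zero [Nonempty ι] (v : ι → E) {r : ℝ}
    (hr : Fintype.card ι ≤ r) (y : E) :
    ∑ S : Finset ι with y - ∑ i ∈ S, v i ∈ (r - #S) • convexHull ℝ (Set.range v),
      (-1 : ℤ) ^ #S = 0 := by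
  have hmem (S : Finset ι) : y - ∑ i ∈ S, v i ∈ (r - #S) • convexHull ℝ (Set.range v) ↔
      (weightFiber v r y ∩ ⋂ i ∈ S, {c | 1 ≤ c i}).Nonempty := by
    have hS : (#S : ℝ) ≤ r := (Nat.cast_le.2 S.card_le_univ).trans hr
    rw [weightFiber_inter_biInter_nonempty_iff,
      weightFiber_nonempty_iff_mem_smul_convexHull (sub_nonneg.2 hS)]
  simp only [hmem, ← powerset_univ]
  exact sum_neg_one_pow_card_inter_biInter_nonempty_eq_zero (isCompact_weightFiber v r y)
    (convex_weightFiber v r y) (fun i _ => isClosed_le continuous_const (continuous_apply i))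
    (fun i _ => (convex_Ici 1).linear_preimage (LinearMap.proj i))
    (weightFiber_subset_iUnion_one_le v y hr)

end WeightFiber

open Classical in
lemma coeff_prod_X_sub_C {ι R : Type*} [CommRing R] (s : Finset ι) (a : ι → R) (j : ℕ) :
    (∏ i ∈ s, (X - C (a i))).coeff j =
      ∑ S ∈ s.powerset with j = #s - #S, (-1 : ℤ) ^ #S • ∏ i ∈ S, a i := by
  rw [prod_sub, finsetSum_coeff, sum_filter]
  refine Finset.sum_congr rfl fun S hS => ?_
  rw [prod_const, card_sdiff_of_subset (mem_powerset.1 hS), ← map_prod, mul_right_comm,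
    ← map_one (C : R →+* R[X]), ← map_neg, ← map_pow, ← map_mul, coeff_C_mul_X_pow]
  simp [zsmul_eq_mul]

lemma sum_coeff_prod_X_sub_C_mul {ι R : Type*} [CommRing R] [Nontrivial R] (s : Finset ι)
    (a : ι → R) (p : ℕ → R) (k : ℕ) :
    ∑ j ∈ Finset.range ((∏ i ∈ s, (X - C (a i))).natDegree + 1),
        (∏ i ∈ s, (X - C (a i))).coeff j * p (k + j) =
      ∑ S ∈ s.powerset, (-1 : ℤ) ^ #S • ((∏ i ∈ S, a i) * p (k + (#s - #S))) := by
  classical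
  simp only [natDegree_finsetProd_X_sub_C_eq_card, coeff_prod_X_sub_C, Finset.sum_mul, sum_filter]
  rw [Finset.sum_comm]
  refine Finset.sum_congr rfl fun S _ => ?_
  simp [ite_mul, mul_assoc]

section LatticePoints

variable {d : ℕ} {P : Set (Fin d → ℝ)}

lemma mem_latticePoints_one {x : Fin d → ℤ} :
    x ∈ latticePoints P 1 ↔ (fun i => (x i : ℝ)) ∈ P := by
  simp [latticePoints]

lemma finite_latticePoints (hP : Bornology.IsBounded P) (k : ℕ) : (latticePoints P k).Finite := by
  obtain ⟨M, hM⟩ := (hP.smul₀ (k : ℝ)).exists_norm_le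
  obtain ⟨N, hN⟩ := exists_nat_ge M
  refine (Set.finite_Icc (fun _ => -(N : ℤ)) fun _ => (N : ℤ)).subset fun x hx => ?_
  have habs (i : Fin d) : |x i| ≤ N := by
    have := (norm_le_pi_norm (fun i => (x i : ℝ)) i).trans ((hM _ hx).trans hN)
    rw [Real.norm_eq_abs] at this
    exact_mod_cast this
  exact ⟨fun i => (abs_le.1 (habs i)).1, fun i => (abs_le.1 (habs i)).2⟩

lemma convexHull_image_latticePoints_one {A : Set (Fin d → ℤ)}
    (hP : P = convexHull ℝ ((fun v i => (v i : ℝ)) '' A)) :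
    convexHull ℝ ((fun v i => (v i : ℝ)) '' latticePoints P 1) = P := by
  refine (convexHull_min ?_ (hP ▸ convex_convexHull ℝ _)).antisymm ?_
  · rintro _ ⟨x, hx, rfl⟩
    exact mem_latticePoints_one.1 hx
  · nth_rw 1 [hP]
    refine convexHull_mono (Set.image_mono fun x hx => mem_latticePoints_one.2 ?_)
    exact hP ▸ subset_convexHull ℝ _ ⟨x, hx, rfl⟩

/-- The integer point transform of `kP`, as an element of the algebra of Laurent polynomials with
coefficients in `R`. It is zero if `kP` has infinitely many lattice points. -/
noncomputable def integerPointTransform (R : Type*) [Semiring R] (P : Set (Fin d → ℝ)) (k : ℕ) :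
    AddMonoidAlgebra R (Fin d → ℤ) :=
  ∑ᶠ x ∈ latticePoints P k, AddMonoidAlgebra.single x 1

open Classical in
lemma coeff_integerPointTransform {R : Type*} [Semiring R] (hP : Bornology.IsBounded P) (k : ℕ)
    (x : Fin d → ℤ) :
    (integerPointTransform R P k).coeff x = if x ∈ latticePoints P k then 1 else 0 := by
  rw [integerPointTransform, finsum_mem_eq_finite_toFinset_sum _ (finite_latticePoints hP k)]
  simp [AddMonoidAlgebra.coeff_sum, Finsupp.single_apply, Finsupp.finsetSum_apply]

open Classical in
lemma coeff_prod_single_mul_integerPointTransform {R ι : Type*} [CommRing R]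
    (hP : Bornology.IsBounded P) (a : ι → Fin d → ℤ) (S : Finset ι) (k : ℕ) (x : Fin d → ℤ) :
    ((∏ i ∈ S, AddMonoidAlgebra.single (a i) 1) * integerPointTransform R P k).coeff x =
      if x - ∑ i ∈ S, a i ∈ latticePoints P k then 1 else 0 := by
  rw [AddMonoidAlgebra.prod_single, AddMonoidAlgebra.coeff_single_mul_apply,
    coeff_integerPointTransform hP, neg_add_eq_sub, prod_const_one, one_mul]

variable {ι : Type*} [Fintype ι] {a : ι → Fin d → ℤ}

open Classical in
lemma sum_neg_one_pow_card_sub_sum_mem_latticePoints_eq_zero [Nonempty ι]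
    (hP : P = convexHull ℝ (Set.range fun i j => (a i j : ℝ))) (k : ℕ) (x : Fin d → ℤ) :
    ∑ S : Finset ι with x - ∑ i ∈ S, a i ∈ latticePoints P (k + (Fintype.card ι - #S)),
      (-1 : ℤ) ^ #S = 0 := by
  have hcard : (Fintype.card ι : ℝ) ≤ (k + Fintype.card ι : ℕ) :=
    Nat.cast_le.2 (Nat.le_add_left _ _)
  rw [← sum_neg_one_pow_card_sub_sum_mem_smul_convexHull_eq_zero (fun i j => (a i j : ℝ)) hcard
    fun j => (x j : ℝ)]
  refine Finset.sum_congr (filter_congr fun S _ => ?_) fun _ _ => rfl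
  rw [← hP, latticePoints, Set.mem_ofPred, ← Nat.add_sub_assoc S.card_le_univ, Nat.cast_sub
    (S.card_le_univ.trans (Nat.le_add_left _ _))]
  congr! 1
  ext j
  simp

theorem sum_coeff_prod_X_sub_C_single_mul_integerPointTransform_eq_zero {R : Type*} [CommRing R]
    (hP : P = convexHull ℝ (Set.range fun i j => (a i j : ℝ)))
    {χ : Polynomial (AddMonoidAlgebra R (Fin d → ℤ))}
    (hχ : χ = ∏ i, (X - C (AddMonoidAlgebra.single (a i) 1))) (k : ℕ) :
    ∑ j ∈ Finset.range (χ.natDegree + 1), χ.coeff j * integerPointTransform R P (k + j) = 0 := by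
  classical
  nontriviality R
  cases isEmpty_or_nonempty ι
  · simp [integerPointTransform, latticePoints, hP, Set.range_eq_empty]
  have hbdd : Bornology.IsBounded P :=
    hP ▸ ((Set.finite_range _).isCompact_convexHull ℝ).isBounded
  rw [hχ, sum_coeff_prod_X_sub_C_mul]
  ext x
  simp only [AddMonoidAlgebra.coeff_sum, Finsupp.finsetSum_apply, AddMonoidAlgebra.coeff_smul,
    Finsupp.smul_apply, coeff_prod_single_mul_integerPointTransform hbdd, smul_ite, smul_zero,
    powerset_univ, card_univ, ← sum_filter, ← Finset.sum_smul,
    sum_neg_one_pow_card_sub_sum_mem_latticePoints_eq_zero hP]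
  simp

theorem stmt_9_general {R : Type*} [CommRing R] {A : Set (Fin d → ℤ)} (hA : A.Finite)
    (hP : P = convexHull ℝ ((fun v i => (v i : ℝ)) '' A))
    {χ : Polynomial (AddMonoidAlgebra R (Fin d → ℤ))}
    (hχ : χ = ∏ᶠ x ∈ A, (X - C (AddMonoidAlgebra.single x 1))) (k : ℕ) :
    ∑ j ∈ Finset.range (χ.natDegree + 1), χ.coeff j * integerPointTransform R P (k + j) = 0 := by
  have := hA.fintype
  refine sum_coeff_prod_X_sub_C_single_mul_integerPointTransform_eq_zero
    (a := fun x : A => x.1) ?_ ?_ k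
  · rw [hP, Set.image_eq_range]
  · rw [hχ, ← finprod_set_coe_eq_finprod_mem, finprod_eq_prod_of_fintype]

end LatticePoints

/-- Let `P ⊆ ℝ^d` be an integral polytope with the integer decomposition property and let
`p k = ∑_{x ∈ kP ∩ ℤ^d} z^x`, an element of the Laurent monomial algebra
`AddMonoidAlgebra ℤ (Fin d → ℤ)`.  Then `p` satisfies the linear recurrence whose
characteristic polynomial is `∏_{x ∈ P ∩ ℤ^d} (t - z^x)`. -/
theorem stmt_9 (d : ℕ) (V : Finset (Fin d → ℤ)) (P : Set (Fin d → ℝ))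
    (hP : P = convexHull ℝ ((fun (v : Fin d → ℤ) (i : Fin d) => (v i : ℝ)) '' V))
    (hIDP : ∀ k : ℕ, 1 ≤ k → ∀ x ∈ latticePoints P k,
      ∃ y : Fin k → (Fin d → ℤ), (∀ i, y i ∈ latticePoints P 1) ∧ x = ∑ i, y i)
    (p : ℕ → AddMonoidAlgebra ℤ (Fin d → ℤ))
    (hp : ∀ k : ℕ, p k = ∑ᶠ x ∈ latticePoints P k,
      AddMonoidAlgebra.single x (1 : ℤ))
    (χ : Polynomial (AddMonoidAlgebra ℤ (Fin d → ℤ)))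
    (hχ : χ = ∏ᶠ x ∈ latticePoints P 1,
      ((X : Polynomial (AddMonoidAlgebra ℤ (Fin d → ℤ)))
        - C (AddMonoidAlgebra.single x (1 : ℤ)))) :
    ∀ k : ℕ, ∑ j ∈ Finset.range (χ.natDegree + 1), χ.coeff j * p (k + j) = 0 := by
  obtain rfl : p = integerPointTransform ℤ P := funext hp
  have hbdd : Bornology.IsBounded P :=
    hP ▸ ((V.finite_toSet.image _).isCompact_convexHull ℝ).isBounded
  exact stmt_9_general (finite_latticePoints hbdd 1) (convexHull_image_latticePoints_one hP).symm hχ
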